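/- Let γ₁ and γ₂ be two simple curves in ℝ² each having endpoints a and b with a ≠ b, such that γ₁ ∩ γ₂ = {a, b}. Then γ₁ ∪ γ₂ is a Jordan curve, i.e. it is the boundary of a bounded connected open domain. -/

import Mathlib

open Set

noncomputable section

abbrev E2 := EuclideanSpace ℝ (Fin 2)

/-- `q` admits a continuous logarithm on `S`. -/
def HasLogOn {X : Type*} [TopologicalSpace X] (q : X → ℂ) (S : Set X) : Prop :=
  ∃ l : X → ℂ, ContinuousOn l S ∧ ∀ x ∈ S, Complex.exp (l x) = q x

theorem eq_of_exp_eq_of_isPreconnected {X : Type*} [TopologicalSpace X] {S : Set X} {d : X → ℂ}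
    (hS : IsPreconnected S) (hd : ContinuousOn d S)
    (h : ∀ x ∈ S, ∀ y ∈ S, Complex.exp (d x) = Complex.exp (d y)) {x y : X}
    (hx : x ∈ S) (hy : y ∈ S) : d x = d y :=
  Complex.isCoveringMap_exp.isSeparatedMap.constOn_of_comp
    Complex.isCoveringMap_exp.isLocalHomeomorph.isLocallyInjective hS hd
    (fun a ha b hb => Subtype.ext (h a ha b hb)) hx hy

/-- Continuous logarithms propagate along homotopies of nonvanishing functions. -/
theorem HasLogOn.of_homotopy {X : Type*} [TopologicalSpace X] {S : Set X} {H : ℝ × X → ℂ}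
    (hH : ContinuousOn H (Icc 0 1 ×ˢ S)) (hne : ∀ t ∈ Icc (0 : ℝ) 1, ∀ x ∈ S, H (t, x) ≠ 0)
    (h0 : HasLogOn (fun x => H (0, x)) S) : HasLogOn (fun x => H (1, x)) S := by
  classical
  obtain ⟨l, hl, hexp⟩ := h0
  let K : C(unitInterval × S, {z : ℂ // z ≠ 0}) :=
    ⟨fun p => ⟨H (p.1, p.2), hne _ p.1.2 _ p.2.2⟩, by
      refine Continuous.subtype_mk ?_ _
      exact hH.comp_continuous (f := fun p : unitInterval × S => ((p.1 : ℝ), (p.2 : X)))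
        (by fun_prop) (fun p => ⟨p.1.2, p.2.2⟩)⟩
  let l' : C(S, ℂ) := ⟨S.domRestrict l, continuousOn_iff_continuous_domRestrict.1 hl⟩
  have hK : ∀ x, K (0, x) = (⟨_, (l' x).exp_ne_zero⟩ : {z : ℂ // z ≠ 0}) := fun x =>
    Subtype.ext (hexp x x.2).symm
  let L := Complex.isCoveringMap_exp.liftHomotopy K l' hK
  have hL : ∀ x : S, Complex.exp (L (1, x)) = H (1, x) := fun x =>
    congrArg Subtype.val
      (congrFun (Complex.isCoveringMap_exp.liftHomotopy_lifts K l' hK) ((1 : unitInterval), x))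
  refine ⟨fun x => if hx : x ∈ S then L (1, ⟨x, hx⟩) else 0, ?_, fun x hx => ?_⟩
  · rw [continuousOn_iff_continuous_domRestrict]
    have : Continuous fun x : S => L (1, x) := by fun_prop
    convert! this using 2 with x
    simp
  · simpa [hx] using hL ⟨x, hx⟩

/-- Two logarithms on sets with preconnected intersection can be made to agree there. -/
theorem HasLogOn.exists_common {X : Type*} [TopologicalSpace X] {q : X → ℂ} {A B : Set X}
    (hA : HasLogOn q A) (hB : HasLogOn q B) (hAB : IsPreconnected (A ∩ B)) :
    ∃ l : X → ℂ, ContinuousOn l A ∧ ContinuousOn l B ∧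
      ∀ x ∈ A ∪ B, Complex.exp (l x) = q x := by
  classical
  obtain ⟨lA, hlA, hA⟩ := hA
  obtain ⟨lB, hlB, hB⟩ := hB
  obtain ⟨c, hc, hc1⟩ : ∃ c : ℂ, (∀ x ∈ A ∩ B, lB x + c = lA x) ∧ Complex.exp c = 1 := by
    rcases (A ∩ B).eq_empty_or_nonempty with h | ⟨y, hy⟩
    · exact ⟨0, by simp [h], by simp⟩
    · have h1 : ∀ x ∈ A ∩ B, Complex.exp (lA x - lB x) = 1 := fun x hx => by
        rw [Complex.exp_sub, hA x hx.1, hB x hx.2]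
        exact div_self (hA x hx.1 ▸ Complex.exp_ne_zero _)
      refine ⟨lA y - lB y, fun x hx => ?_, h1 y hy⟩
      rw [eq_of_exp_eq_of_isPreconnected (d := fun x => lA x - lB x) hAB
        ((hlA.mono inter_subset_left).sub (hlB.mono inter_subset_right))
        (fun a ha b hb => (h1 a ha).trans (h1 b hb).symm) hy hx]
      ring
  have hEq : EqOn (A.piecewise lA fun x => lB x + c) (fun x => lB x + c) B := fun x hx => by
    by_cases hxA : x ∈ A
    · rw [piecewise_eq_of_mem _ _ _ hxA]; exact (hc x ⟨hxA, hx⟩).symm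
    · rw [piecewise_eq_of_notMem _ _ _ hxA]
  refine ⟨A.piecewise lA fun x => lB x + c, hlA.congr (piecewise_eqOn _ _ _),
    (hlB.add continuousOn_const).congr hEq, ?_⟩
  rintro x (hx | hx)
  · rw [piecewise_eq_of_mem _ _ _ hx, hA x hx]
  · rw [hEq hx, Complex.exp_add, hc1, mul_one, hB x hx]

theorem HasLogOn.union_of_isClosed {X : Type*} [TopologicalSpace X] {q : X → ℂ} {A B : Set X}
    (hA : HasLogOn q A) (hB : HasLogOn q B) (hAB : IsPreconnected (A ∩ B))
    (hAc : IsClosed A) (hBc : IsClosed B) : HasLogOn q (A ∪ B) :=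
  let ⟨l, h1, h2, h3⟩ := hA.exists_common hB hAB
  ⟨l, h1.union_of_isClosed h2 hAc hBc, h3⟩

theorem HasLogOn.union_of_isOpen {X : Type*} [TopologicalSpace X] {q : X → ℂ} {A B : Set X}
    (hA : HasLogOn q A) (hB : HasLogOn q B) (hAB : IsPreconnected (A ∩ B))
    (hAo : IsOpen A) (hBo : IsOpen B) : HasLogOn q (A ∪ B) :=
  let ⟨l, h1, h2, h3⟩ := hA.exists_common hB hAB
  ⟨l, h1.union_of_isOpen h2 hAo hBo, h3⟩

theorem HasLogOn.mono {X : Type*} [TopologicalSpace X] {q : X → ℂ} {A B : Set X}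
    (hB : HasLogOn q B) (h : A ⊆ B) : HasLogOn q A :=
  let ⟨l, h1, h2⟩ := hB
  ⟨l, h1.mono h, fun x hx => h2 x (h hx)⟩

theorem HasLogOn.congr {X : Type*} [TopologicalSpace X] {q q' : X → ℂ} {A : Set X}
    (hq : HasLogOn q A) (h : EqOn q' q A) : HasLogOn q' A :=
  let ⟨l, h1, h2⟩ := hq
  ⟨l, h1, fun x hx => (h2 x hx).trans (h hx).symm⟩

/-- `z - p` has no continuous logarithm on a circle centred at `p`. -/
theorem not_hasLogOn_sphere {p : ℂ} {r : ℝ} (hr : 0 < r) :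
    ¬ HasLogOn (fun z => z - p) (Metric.sphere p r) := by
  rintro ⟨l, hl, hexp⟩
  have hmem : ∀ θ : ℝ, circleMap p r θ ∈ Metric.sphere p r := circleMap_mem_sphere p hr.le
  have hc : Continuous fun θ : ℝ => l (circleMap p r θ) - θ * Complex.I :=
    (hl.comp_continuous (continuous_circleMap p r) hmem).sub (by fun_prop)
  have he : ∀ θ : ℝ, Complex.exp (l (circleMap p r θ) - θ * Complex.I) = r := fun θ => by
    rw [Complex.exp_sub, hexp _ (hmem θ)]
    simp [circleMap]
  have h := eq_of_exp_eq_of_isPreconnected isPreconnected_univ hc.continuousOn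
    (fun x _ y _ => (he x).trans (he y).symm) (mem_univ 0) (mem_univ (2 * Real.pi))
  have h2 : circleMap p r (2 * Real.pi) = circleMap p r 0 := by simp [circleMap]
  have h3 : (2 * Real.pi : ℂ) * Complex.I = 0 := by
    simp only [h2, Complex.ofReal_zero, Complex.ofReal_mul, Complex.ofReal_ofNat] at h
    linear_combination h
  simp [Real.pi_ne_zero] at h3

theorem HasLogOn.mul {X : Type*} [TopologicalSpace X] {q q' : X → ℂ} {A : Set X}
    (h : HasLogOn q A) (h' : HasLogOn q' A) : HasLogOn (fun x => q x * q' x) A :=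
  let ⟨l, h1, h2⟩ := h
  let ⟨l', h1', h2'⟩ := h'
  ⟨fun x => l x + l' x, h1.add h1', fun x hx => by rw [Complex.exp_add, h2 x hx, h2' x hx]⟩

theorem hasLogOn_const {X : Type*} [TopologicalSpace X] {c : ℂ} (hc : c ≠ 0) (A : Set X) :
    HasLogOn (fun _ => c) A :=
  ⟨fun _ => Complex.log c, continuousOn_const, fun _ _ => Complex.exp_log hc⟩

theorem hasLogOn_univ {q : ℂ → ℂ} (hq : Continuous q) (hne : ∀ z, q z ≠ 0) :
    HasLogOn q univ := by
  have := HasLogOn.of_homotopy (S := univ) (H := fun p : ℝ × ℂ => q (p.1 * p.2))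
    (by fun_prop) (fun _ _ _ _ => hne _) (by simpa using hasLogOn_const (hne 0) univ)
  simpa using this

/-- `z - p` has a logarithm on any arc avoiding `p`. -/
theorem hasLogOn_arc {f : ℝ → ℂ} {s t : ℝ} (hst : s ≤ t) (hf : ContinuousOn f (Icc s t))
    (hfi : InjOn f (Icc s t)) {p : ℂ} (hp : p ∉ f '' Icc s t) :
    HasLogOn (fun z => z - p) (f '' Icc s t) := by
  have hne : ∀ u ∈ Icc s t, f u - p ≠ 0 := fun u hu h => hp ⟨u, hu, sub_eq_zero.1 h⟩
  have hmap : ∀ x ∈ Icc (0 : ℝ) 1 ×ˢ Icc s t, s + x.1 * (x.2 - s) ∈ Icc s t := by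
    rintro ⟨τ, u⟩ ⟨⟨h0, h1⟩, h2, h3⟩
    dsimp only at *
    constructor <;> nlinarith
  have key : HasLogOn (fun u => f u - p) (Icc s t) := by
    have := HasLogOn.of_homotopy (S := Icc s t)
      (H := fun x : ℝ × ℝ => f (s + x.1 * (x.2 - s)) - p)
      ((hf.comp (by fun_prop) hmap).sub continuousOn_const)
      (fun τ hτ u hu => hne _ (hmap (τ, u) ⟨hτ, hu⟩))
      (by simpa using hasLogOn_const (hne s ⟨le_rfl, hst⟩) (Icc s t))
    simpa using this
  obtain ⟨l, hl, hexp⟩ := key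
  refine ⟨fun z => l (Function.invFunOn f (Icc s t) z), ?_, ?_⟩
  · have hinv : ContinuousOn (Function.invFunOn f (Icc s t)) (f '' Icc s t) := by
      rw [continuousOn_iff_isClosed]
      intro C hC
      refine ⟨f '' (Icc s t ∩ C), ?_, ?_⟩
      · exact ((isCompact_Icc.inter_right hC).image_of_continuousOn
          (hf.mono inter_subset_left)).isClosed
      · ext z
        constructor
        · rintro ⟨h1, u, hu, rfl⟩
          rw [mem_preimage, hfi.leftInvOn_invFunOn hu] at h1
          exact ⟨⟨u, ⟨hu, h1⟩, rfl⟩, u, hu, rfl⟩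
        · rintro ⟨⟨u, ⟨hu, h1⟩, rfl⟩, -⟩
          exact ⟨by rwa [mem_preimage, hfi.leftInvOn_invFunOn hu], u, hu, rfl⟩
    exact hl.comp hinv fun z hz => Function.invFunOn_mem hz
  · intro z hz
    simp only [hexp _ (Function.invFunOn_mem hz), Function.invFunOn_eq hz]

/-- If `z - p` has a logarithm on the boundary of a bounded set, then `p` is not interior to it. -/
theorem notMem_of_hasLogOn_frontier {Ω : Set ℂ} (hb : Bornology.IsBounded Ω)
    {p : ℂ} (h : HasLogOn (fun z => z - p) (frontier Ω)) : p ∉ Ω := by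
  classical
  intro hp
  obtain ⟨l, hl, hexp⟩ := h
  obtain ⟨L, hL⟩ := ContinuousMap.exists_restrict_eq (isClosed_frontier (s := Ω))
    ⟨(frontier Ω).domRestrict l, continuousOn_iff_continuous_domRestrict.1 hl⟩
  have hL' : ∀ z ∈ frontier Ω, L z = l z := fun z hz => DFunLike.congr_fun hL ⟨z, hz⟩
  let q : ℂ → ℂ := Ω.piecewise (fun z => Complex.exp (L z)) fun z => z - p
  have hq : Continuous q := by
    refine Continuous.piecewise (fun z hz => ?_) (by fun_prop) (by fun_prop)
    rw [hL' z hz, hexp z hz]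
  have hq0 : ∀ z, q z ≠ 0 := fun z => by
    by_cases hz : z ∈ Ω
    · simp [q, hz]
    · simpa [q, hz, sub_eq_zero] using fun h : z = p => hz (h ▸ hp)
  obtain ⟨R, hR⟩ := hb.subset_ball p
  have hR0 : 0 < R := by simpa using hR hp
  refine not_hasLogOn_sphere (p := p) hR0 (((hasLogOn_univ hq hq0).mono (subset_univ _)).congr ?_)
  intro z hz
  have : z ∉ Ω := fun h => (Metric.mem_ball.1 (hR h)).ne hz
  simp [q, this]

theorem not_hasLogOn_compl_pair {a b : ℂ} (hab : a ≠ b) :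
    ¬ HasLogOn (fun z => (z - a) / (z - b)) ({a, b}ᶜ : Set ℂ) := by
  intro h
  have hd : 0 < dist b a / 2 := by
    have := dist_pos.2 hab.symm
    positivity
  have hb : HasLogOn (fun z => z - b) (Metric.sphere a (dist b a / 2)) := by
    have := HasLogOn.of_homotopy (S := Metric.sphere a (dist b a / 2))
      (H := fun x : ℝ × ℂ => (a + x.1 * (x.2 - a)) - b) (by fun_prop) (fun t ht z hz h0 => ?_)
      (by simpa using hasLogOn_const (sub_ne_zero.2 hab) _)
    · simpa using this
    · have h1 : (t : ℂ) * (z - a) = b - a := by linear_combination h0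
      have h2 := congrArg norm h1
      rw [norm_mul, ← dist_eq_norm, ← dist_eq_norm, Metric.mem_sphere.1 hz, Complex.norm_real,
        Real.norm_of_nonneg ht.1] at h2
      nlinarith [ht.2]
  have hzb : ∀ z ∈ Metric.sphere a (dist b a / 2), z ≠ b := by
    rintro z hz rfl
    have := Metric.mem_sphere.1 hz
    linarith
  refine not_hasLogOn_sphere hd (((h.mono ?_).mul hb).congr fun z hz => ?_)
  · rintro z hz (rfl | rfl)
    · simp only [Metric.mem_sphere, dist_self] at hz
      exact hd.ne hz
    · exact hzb z hz rfl
  · exact (div_mul_cancel₀ _ (sub_ne_zero.2 (hzb z hz))).symm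

theorem hasLogOn_compl_arc {f : ℝ → ℂ} (hf : ContinuousOn f (Icc 0 1)) :
    HasLogOn (fun z => (z - f 0) / (z - f 1)) (f '' Icc 0 1)ᶜ := by
  have hne : ∀ t ∈ Icc (0 : ℝ) 1, ∀ z ∈ (f '' Icc 0 1)ᶜ, z - f t ≠ 0 := fun t ht z hz h =>
    hz ⟨t, ht, (sub_eq_zero.1 h).symm⟩
  have hsymm : ∀ t ∈ Icc (0 : ℝ) 1, 1 - t ∈ Icc (0 : ℝ) 1 := fun t ht =>
    ⟨by linarith [ht.2], by linarith [ht.1]⟩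
  have h1 : (1 : ℝ) ∈ Icc (0 : ℝ) 1 := by simp
  have := HasLogOn.of_homotopy (S := (f '' Icc 0 1)ᶜ)
    (H := fun x : ℝ × ℂ => (x.2 - f (1 - x.1)) / (x.2 - f 1))
    ((continuousOn_snd.sub (hf.comp (by fun_prop) fun x hx => hsymm _ hx.1)).div (by fun_prop)
      fun x hx => hne 1 h1 _ hx.2)
    (fun t ht z hz => div_ne_zero (hne _ (hsymm t ht) z hz) (hne 1 h1 z hz))
    ((hasLogOn_const one_ne_zero _).congr fun z hz => by simp [div_self (hne 1 h1 z hz)])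
  simpa using this

/-- Two arcs sharing exactly their two endpoints separate the plane. -/
theorem not_isPreconnected_compl_union_arcs {a b : ℂ} (hab : a ≠ b) {f g : ℝ → ℂ}
    (hf : ContinuousOn f (Icc 0 1)) (hg : ContinuousOn g (Icc 0 1))
    (hf0 : f 0 = a) (hf1 : f 1 = b) (hg0 : g 0 = a) (hg1 : g 1 = b)
    (hint : f '' Icc 0 1 ∩ g '' Icc 0 1 = {a, b}) :
    ¬ IsPreconnected (f '' Icc 0 1 ∪ g '' Icc 0 1)ᶜ := by
  intro h
  have h1 := hasLogOn_compl_arc hf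
  have h2 := hasLogOn_compl_arc hg
  rw [hf0, hf1] at h1
  rw [hg0, hg1] at h2
  rw [compl_union] at h
  have h3 := h1.union_of_isOpen h2 h (isCompact_Icc.image_of_continuousOn hf).isClosed.isOpen_compl
    (isCompact_Icc.image_of_continuousOn hg).isClosed.isOpen_compl
  rw [← compl_inter, hint] at h3
  exact not_hasLogOn_compl_pair hab h3

theorem exists_isBounded_connectedComponentIn_compl {K : Set ℂ} (hK : Bornology.IsBounded K)
    (hc : ¬ IsPreconnected Kᶜ) :
    ∃ x ∈ Kᶜ, Bornology.IsBounded (connectedComponentIn Kᶜ x) := by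
  by_contra! hcon
  obtain ⟨R, hR0, hR⟩ := hK.subset_closedBall_lt 0 0
  let E : Set ℂ := (fun p : ℝ × ℝ => circleMap 0 p.1 p.2) '' (Ioi R ×ˢ univ)
  have hmemE : ∀ z : ℂ, z ∉ Metric.closedBall 0 R → z ∈ E := fun z hz =>
    ⟨(‖z‖, z.arg), ⟨by simpa using hz, mem_univ _⟩, by simp [circleMap]⟩
  have hE : IsPreconnected E := by
    refine (isPreconnected_Ioi.prod isPreconnected_univ).image _ ?_
    unfold circleMap
    fun_prop
  have hEK : E ⊆ Kᶜ := by
    rintro _ ⟨⟨r, θ⟩, ⟨hr, -⟩, rfl⟩ hmem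
    have h1 := hR hmem
    have hr' : R < r := hr
    simp only [Metric.mem_closedBall, dist_zero_right, norm_circleMap_zero] at h1
    linarith [le_abs_self r]
  let y : ℂ := circleMap 0 (R + 1) 0
  have hy : y ∈ E := ⟨(R + 1, 0), ⟨by simp, mem_univ _⟩, rfl⟩
  have hsub : Kᶜ ⊆ connectedComponentIn Kᶜ y := by
    intro x hx
    obtain ⟨z, hz, hzR⟩ := not_subset.1 fun h =>
      hcon x hx (Metric.isBounded_closedBall.subset (h : _ ⊆ Metric.closedBall (0 : ℂ) R))
    have h1 := hE.subset_connectedComponentIn (hmemE z hzR) hEK hy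
    rw [← connectedComponentIn_eq h1, ← connectedComponentIn_eq hz]
    exact mem_connectedComponentIn hx
  refine hc ?_
  rw [← (connectedComponentIn_subset _ y).antisymm hsub]
  exact isPreconnected_connectedComponentIn

theorem frontier_connectedComponentIn_subset {X : Type*} [TopologicalSpace X]
    [LocallyConnectedSpace X] {U : Set X} (hU : IsOpen U) (x : X) :
    frontier (connectedComponentIn U x) ⊆ Uᶜ := by
  rintro z ⟨hz, hz'⟩ hzU
  obtain ⟨w, hw, hwx⟩ := mem_closure_iff.1 hz _ hU.connectedComponentIn
    (mem_connectedComponentIn hzU)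
  rw [hU.connectedComponentIn.interior_eq, connectedComponentIn_eq hwx,
    ← connectedComponentIn_eq hw] at hz'
  exact hz' (mem_connectedComponentIn hzU)

/-- A closed subset of two arcs sharing only endpoints that misses an inner point of the first
arc carries a logarithm of `z - p` for every `p` off the arcs. -/
theorem hasLogOn_of_notMem {f g : ℝ → ℂ}
    (hf : ContinuousOn f (Icc 0 1)) (hg : ContinuousOn g (Icc 0 1))
    (hfi : InjOn f (Icc 0 1)) (hgi : InjOn g (Icc 0 1))
    (hint : f '' Icc 0 1 ∩ g '' Icc 0 1 ⊆ {f 0, f 1})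
    {p : ℂ} (hp : p ∉ f '' Icc 0 1 ∪ g '' Icc 0 1) {F : Set ℂ} (hF : IsClosed F)
    (hFJ : F ⊆ f '' Icc 0 1 ∪ g '' Icc 0 1) {t : ℝ} (ht : t ∈ Ioo (0 : ℝ) 1) (htF : f t ∉ F) :
    HasLogOn (fun z => z - p) F := by
  have hev : ∀ᶠ s in nhds t, s ∈ Ioo (0 : ℝ) 1 ∧ f s ∉ F :=
    Filter.Eventually.and (isOpen_Ioo.mem_nhds ht) ((hf.continuousAt (Icc_mem_nhds ht.1 ht.2)).eventually
      (hF.isOpen_compl.mem_nhds htF))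
  obtain ⟨l, u, ⟨hlt, htu⟩, hlu⟩ := mem_nhds_iff_exists_Ioo_subset.1 hev
  obtain ⟨hl, hu⟩ := (Ioo_subset_Ioo_iff (hlt.trans htu)).1 fun s hs => (hlu hs).1
  have hl1 : l < 1 := hlt.trans ht.2
  have hu0 : 0 < u := ht.1.trans htu
  have hs1 : Icc 0 l ⊆ Icc (0 : ℝ) 1 := Icc_subset_Icc_right hl1.le
  have hs2 : Icc u 1 ⊆ Icc (0 : ℝ) 1 := Icc_subset_Icc_left hu0.le
  have m0 : (0 : ℝ) ∈ Icc (0 : ℝ) 1 := by simp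
  have m1 : (1 : ℝ) ∈ Icc (0 : ℝ) 1 := by simp
  have hL : HasLogOn (fun z => z - p) (f '' Icc 0 l) :=
    hasLogOn_arc hl (hf.mono hs1) (hfi.mono hs1) fun h => hp (.inl (image_mono hs1 h))
  have hU : HasLogOn (fun z => z - p) (f '' Icc u 1) :=
    hasLogOn_arc hu (hf.mono hs2) (hfi.mono hs2) fun h => hp (.inl (image_mono hs2 h))
  have hG : HasLogOn (fun z => z - p) (g '' Icc 0 1) :=
    hasLogOn_arc zero_le_one hg hgi fun h => hp (.inr h)
  have cL : IsClosed (f '' Icc 0 l) := (isCompact_Icc.image_of_continuousOn (hf.mono hs1)).isClosed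
  have cU : IsClosed (f '' Icc u 1) := (isCompact_Icc.image_of_continuousOn (hf.mono hs2)).isClosed
  have cG : IsClosed (g '' Icc 0 1) := (isCompact_Icc.image_of_continuousOn hg).isClosed
  have i1 : f '' Icc 0 l ∩ g '' Icc 0 1 ⊆ {f 0} := by
    rintro _ ⟨⟨s, hs, rfl⟩, h⟩
    rcases hint ⟨⟨s, hs1 hs, rfl⟩, h⟩ with h | h
    · exact h
    · have := hfi (hs1 hs) m1 h
      linarith [hs.2]
  have i2 : (f '' Icc 0 l ∪ g '' Icc 0 1) ∩ f '' Icc u 1 ⊆ {f 1} := by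
    rintro _ ⟨h, ⟨s, hs, rfl⟩⟩
    rcases h with ⟨s', hs', h⟩ | h
    · have := hfi (hs1 hs') (hs2 hs) h
      linarith [hs.1, hs'.2]
    · rcases hint ⟨⟨s, hs2 hs, rfl⟩, h⟩ with h | h
      · have := hfi (hs2 hs) m0 h
        linarith [hs.1]
      · exact h
  refine ((hL.union_of_isClosed hG (subsingleton_singleton.anti i1).isPreconnected cL
    cG).union_of_isClosed hU (subsingleton_singleton.anti i2).isPreconnected
    (cL.union cG) cU).mono fun z hz => ?_
  rcases hFJ hz with ⟨s, hs, rfl⟩ | h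
  · rcases le_or_gt s l with h1 | h1
    · exact .inl (.inl ⟨s, ⟨hs.1, h1⟩, rfl⟩)
    · rcases le_or_gt u s with h2 | h2
      · exact .inr ⟨s, ⟨h2, hs.2⟩, rfl⟩
      · exact ((hlu ⟨h1, h2⟩).2 hz).elim
  · exact .inl (.inr h)

theorem image_Icc_subset_of_image_Ioo_subset {f : ℝ → ℂ} (hf : ContinuousOn f (Icc 0 1))
    {F : Set ℂ} (hF : IsClosed F) (h : ∀ t ∈ Ioo (0 : ℝ) 1, f t ∈ F) : f '' Icc 0 1 ⊆ F := by
  have hcl : closure (Ioo (0 : ℝ) 1) = Icc 0 1 := closure_Ioo zero_ne_one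
  rw [← hcl] at hf ⊢
  exact hf.image_closure.trans (hF.closure_subset_iff.2 (image_subset_iff.2 h))

/-- The union of two plane arcs sharing exactly their two endpoints bounds a bounded domain. -/
theorem exists_isConnected_frontier_eq_union_arcs {a b : ℂ} (hab : a ≠ b) {f g : ℝ → ℂ}
    (hf : ContinuousOn f (Icc 0 1)) (hg : ContinuousOn g (Icc 0 1))
    (hfi : InjOn f (Icc 0 1)) (hgi : InjOn g (Icc 0 1))
    (hf0 : f 0 = a) (hf1 : f 1 = b) (hg0 : g 0 = a) (hg1 : g 1 = b)
    (hint : f '' Icc 0 1 ∩ g '' Icc 0 1 = {a, b}) :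
    ∃ Ω : Set ℂ, IsOpen Ω ∧ Bornology.IsBounded Ω ∧ IsConnected Ω ∧
      frontier Ω = f '' Icc 0 1 ∪ g '' Icc 0 1 := by
  have hJ : IsCompact (f '' Icc 0 1 ∪ g '' Icc 0 1) :=
    (isCompact_Icc.image_of_continuousOn hf).union (isCompact_Icc.image_of_continuousOn hg)
  have hJo := hJ.isClosed.isOpen_compl
  obtain ⟨p, hp, hb⟩ := exists_isBounded_connectedComponentIn_compl hJ.isBounded
    (not_isPreconnected_compl_union_arcs hab hf hg hf0 hf1 hg0 hg1 hint)
  have hfr := frontier_connectedComponentIn_subset hJo p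
  rw [compl_compl] at hfr
  have hpm := mem_connectedComponentIn hp
  refine ⟨_, hJo.connectedComponentIn, hb, isConnected_connectedComponentIn_iff.2 hp,
    hfr.antisymm (union_subset ?_ ?_)⟩
  · refine image_Icc_subset_of_image_Ioo_subset hf isClosed_frontier fun t ht => ?_
    by_contra htF
    refine notMem_of_hasLogOn_frontier hb (hasLogOn_of_notMem hf hg hfi hgi ?_ hp
      isClosed_frontier hfr ht htF) hpm
    rw [hint, hf0, hf1]
  · refine image_Icc_subset_of_image_Ioo_subset hg isClosed_frontier fun t ht => ?_
    by_contra htF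
    refine notMem_of_hasLogOn_frontier hb (hasLogOn_of_notMem hg hf hgi hfi ?_ ?_
      isClosed_frontier (hfr.trans (union_comm _ _).subset) ht htF) hpm
    · rw [inter_comm, hint, hg0, hg1]
    · rwa [union_comm]

theorem stmt3 (a b : E2) (hab : a ≠ b) (f g : ℝ → E2)
    (hf : ContinuousOn f (Set.Icc 0 1)) (hg : ContinuousOn g (Set.Icc 0 1))
    (hfi : Set.InjOn f (Set.Icc 0 1)) (hgi : Set.InjOn g (Set.Icc 0 1))
    (hf0 : f 0 = a) (hf1 : f 1 = b) (hg0 : g 0 = a) (hg1 : g 1 = b)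
    (hint : f '' Set.Icc 0 1 ∩ g '' Set.Icc 0 1 = {a, b}) :
    ∃ Ω : Set E2, IsOpen Ω ∧ Bornology.IsBounded Ω ∧ IsConnected Ω ∧
      frontier Ω = f '' Set.Icc 0 1 ∪ g '' Set.Icc 0 1 := by
  let e : ℂ ≃ₗᵢ[ℝ] E2 := Complex.orthonormalBasisOneI.repr
  have he : Function.Injective e.symm := e.symm.injective
  obtain ⟨Ω, h1, h2, h3, h4⟩ := exists_isConnected_frontier_eq_union_arcs
    (a := e.symm a) (b := e.symm b) (f := fun t => e.symm (f t)) (g := fun t => e.symm (g t))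
    (he.ne hab) (e.symm.continuous.comp_continuousOn hf) (e.symm.continuous.comp_continuousOn hg)
    (he.comp_injOn hfi) (he.comp_injOn hgi) (by simp [hf0]) (by simp [hf1]) (by simp [hg0])
    (by simp [hg1])
    (by rw [← image_image e.symm f, ← image_image e.symm g, ← image_inter he, hint, image_pair])
  refine ⟨e '' Ω, e.toHomeomorph.isOpenMap _ h1, e.lipschitz.isBounded_image h2,
    h3.image _ e.continuous.continuousOn, ?_⟩
  have h5 : e '' frontier Ω = frontier (e '' Ω) := e.toHomeomorph.image_frontier Ω
  rw [← h5, h4, image_union, image_image, image_image]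
  simp
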